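/- ∑_{n=0}^∞ (3/2)ₙ((2)ₙ)⁵/(((1)ₙ)³(5/4)ₙ(7/4)ₙ n!) · (1/64)ⁿ = 617416/583443 + (19 log 2)/729 + 5298·arccot(√7)/(2401√7). -/

import Mathlib

noncomputable def poch (a : ℝ) (n : ℕ) : ℝ := ∏ i ∈ Finset.range n, (a + i)

/-!
Since `(2)ₙ = (n + 1) n!`, the summand is `(n + 1) ^ 5` times a ratio of Pochhammer symbols, and the
duplication formula identifies that ratio with `3/2 * c (2 * n + 1)`, where `c k = (1)ₖ / (3/2)ₖ`.
The series is therefore a multiple of the odd part of `∑ (k + 1) ^ 5 * c k * w ^ k` at `w = 1/8`.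
Because `(2 * k + 3) * c (k + 1) = 2 * (k + 1) * c k`, telescoping sums reduce this to
`∑ c k * w ^ k = ∫ t in 0..1, (1 - w * (1 - t ^ 2))⁻¹`, which is an arctangent for `w = 1/8` and a
logarithm for `w = -1/8`.
-/

open Polynomial intervalIntegral

lemma poch_zero (a : ℝ) : poch a 0 = 1 :=
  Finset.prod_range_zero _

lemma poch_succ (a : ℝ) (n : ℕ) : poch a (n + 1) = poch a n * (a + n) :=
  Finset.prod_range_succ _ _

lemma poch_succ_left (a : ℝ) (n : ℕ) : poch a (n + 1) = a * poch (a + 1) n := by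
  simp only [poch, Finset.prod_range_succ']
  push_cast
  simp only [add_zero, add_assoc, add_comm (1 : ℝ), mul_comm]

lemma poch_pos {a : ℝ} (ha : 0 < a) (n : ℕ) : 0 < poch a n :=
  Finset.prod_pos fun _ _ => by positivity

lemma poch_le_poch {a b : ℝ} (ha : 0 ≤ a) (hab : a ≤ b) (n : ℕ) : poch a n ≤ poch b n :=
  Finset.prod_le_prod (fun _ _ => by positivity) fun _ _ => by gcongr

lemma poch_one (n : ℕ) : poch 1 n = n.factorial := by
  simp only [poch, ← Finset.prod_range_add_one_eq_factorial, Nat.cast_prod, Nat.cast_add,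
    Nat.cast_one, add_comm]

lemma poch_two (n : ℕ) : poch 2 n = (n + 1) * n.factorial := by
  have h := poch_succ_left 1 n
  rw [poch_one, Nat.factorial_succ, one_mul, one_add_one_eq_two] at h
  exact_mod_cast h.symm

lemma poch_two_mul (a : ℝ) (n : ℕ) :
    poch a (2 * n) = 4 ^ n * (poch (a / 2) n * poch ((a + 1) / 2) n) := by
  induction n with
  | zero => simp [poch_zero]
  | succ n ih =>
    rw [show 2 * (n + 1) = 2 * n + 1 + 1 by ring, poch_succ, poch_succ, ih, poch_succ, poch_succ]
    push_cast
    ring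

/-- The coefficient `c k = (1)ₖ / (3/2)ₖ = (2k)‼ / (2k + 1)‼` of `wᵏ` in `₂F₁(1, 1; 3/2; w)`. -/
noncomputable def wallisRatio (k : ℕ) : ℝ := poch 1 k / poch (3 / 2) k

lemma wallisRatio_zero : wallisRatio 0 = 1 := by
  simp [wallisRatio, poch_zero]

lemma wallisRatio_succ (k : ℕ) :
    (2 * k + 3) * wallisRatio (k + 1) = 2 * (k + 1) * wallisRatio k := by
  have := (poch_pos (show (0 : ℝ) < 3 / 2 by norm_num) k).ne'
  rw [wallisRatio, wallisRatio, poch_succ, poch_succ]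
  field_simp
  ring

lemma wallisRatio_nonneg (k : ℕ) : 0 ≤ wallisRatio k :=
  div_nonneg (poch_pos one_pos k).le (poch_pos (by norm_num) k).le

lemma wallisRatio_le_one (k : ℕ) : wallisRatio k ≤ 1 :=
  div_le_one_of_le₀ (poch_le_poch zero_le_one (by norm_num) k) (poch_pos (by norm_num) k).le

lemma wallisRatio_odd (n : ℕ) :
    3 / 2 * wallisRatio (2 * n + 1)
      = poch (3 / 2) n * n.factorial / (poch (5 / 4) n * poch (7 / 4) n) := by
  have hnum : poch 1 (2 * n + 1) = 4 ^ n * (n.factorial * poch (3 / 2) n) := by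
    rw [poch_succ_left, one_mul, poch_two_mul, ← poch_one]
    norm_num
  have hden : poch (3 / 2) (2 * n + 1) = 3 / 2 * (4 ^ n * (poch (5 / 4) n * poch (7 / 4) n)) := by
    rw [poch_succ_left, poch_two_mul]
    norm_num
  rw [wallisRatio, hnum, hden]
  field_simp

lemma integral_one_sub_sq_pow (k : ℕ) :
    ∫ t in (0 : ℝ)..1, (1 - t ^ 2) ^ k = wallisRatio k := by
  have hcos := integral_sin_pow_mul_cos_pow_odd (a := 0) (b := Real.pi / 2) 0 k
  simp only [pow_zero, one_mul, Real.sin_zero, Real.sin_pi_div_two] at hcos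
  rw [← hcos, EulerSine.integral_cos_pow_eq, integral_sin_pow_odd, wallisRatio, poch, poch,
    ← Finset.prod_div_distrib, ← mul_assoc, one_div, inv_mul_cancel₀ two_ne_zero, one_mul]
  refine Finset.prod_congr rfl fun i _ => ?_
  field_simp
  ring

lemma hasSum_wallisRatio_mul_pow {w : ℝ} (hw : |w| < 1) :
    HasSum (fun k : ℕ => wallisRatio k * w ^ k) (∫ t in (0 : ℝ)..1, (1 - w * (1 - t ^ 2))⁻¹) := by
  have hbound : ∀ t ∈ Set.uIoc (0 : ℝ) 1, |w * (1 - t ^ 2)| ≤ |w| := by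
    intro t ht
    rw [Set.uIoc_of_le zero_le_one] at ht
    rw [abs_mul]
    refine mul_le_of_le_one_right (abs_nonneg w) (abs_le.mpr ⟨?_, ?_⟩) <;> nlinarith [ht.1, ht.2]
  have hterm (k : ℕ) : wallisRatio k * w ^ k = ∫ t in (0 : ℝ)..1, (w * (1 - t ^ 2)) ^ k := by
    simp_rw [mul_pow, integral_const_mul, integral_one_sub_sq_pow, mul_comm]
  simp_rw [hterm]
  refine hasSum_integral_of_dominated_convergence (fun k _ => |w| ^ k)
    (fun k => Continuous.aestronglyMeasurable (by fun_prop))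
    (fun k => .of_forall fun t ht => ?_)
    (.of_forall fun _ _ => summable_geometric_of_lt_one (abs_nonneg w) hw)
    intervalIntegrable_const
    (.of_forall fun t ht => hasSum_geometric_of_abs_lt_one ((hbound t ht).trans_lt hw))
  rw [norm_pow]
  exact pow_le_pow_left₀ (norm_nonneg _) (hbound t ht) k

lemma hasSum_wallisRatio_arctan {u : ℝ} (hu : u ≠ 0) :
    HasSum (fun k : ℕ => wallisRatio k * (u ^ 2 / (1 + u ^ 2)) ^ k)
      ((1 + u ^ 2) / u * Real.arctan u) := by
  have hpos : 0 < 1 + u ^ 2 := by positivity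
  have hw : |u ^ 2 / (1 + u ^ 2)| < 1 := by
    rw [abs_of_nonneg (by positivity), div_lt_one hpos]
    exact lt_one_add _
  convert hasSum_wallisRatio_mul_pow hw using 1
  have hker (t : ℝ) : (1 - u ^ 2 / (1 + u ^ 2) * (1 - t ^ 2))⁻¹
      = (1 + u ^ 2) * (1 + (u * t) ^ 2)⁻¹ := by
    rw [show 1 - u ^ 2 / (1 + u ^ 2) * (1 - t ^ 2) = (1 + (u * t) ^ 2) / (1 + u ^ 2) by
      field_simp; ring, inv_div, div_eq_mul_inv]
  simp_rw [hker, integral_const_mul]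
  rw [integral_comp_mul_left (fun y => (1 + y ^ 2)⁻¹) hu, integral_inv_one_add_sq, mul_zero,
    mul_one, Real.arctan_zero, sub_zero, smul_eq_mul, div_eq_mul_inv, mul_assoc]

lemma integral_inv_one_sub_sq {v : ℝ} (hv : |v| < 1) :
    ∫ y in (0 : ℝ)..v, (1 - y ^ 2)⁻¹ = Real.log ((1 + v) / (1 - v)) / 2 := by
  have hpos : ∀ y ∈ Set.uIcc 0 v, 0 < 1 + y ∧ 0 < 1 - y := by
    intro y hy
    have := abs_lt.mp ((Set.abs_sub_left_of_mem_uIcc hy).trans_lt (by simpa using hv))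
    constructor <;> linarith
  have hderiv : ∀ y ∈ Set.uIcc 0 v, HasDerivAt
      (fun y => (Real.log (1 + y) - Real.log (1 - y)) / 2) (1 - y ^ 2)⁻¹ y := by
    intro y hy
    obtain ⟨h₁, h₂⟩ := hpos y hy
    refine (((((hasDerivAt_id y).const_add 1).log h₁.ne').sub
      (((hasDerivAt_id y).const_sub 1).log h₂.ne')).div_const 2).congr_deriv ?_
    rw [id, show 1 - y ^ 2 = (1 + y) * (1 - y) by ring]
    field_simp
    ring
  obtain ⟨h₁, h₂⟩ := hpos v Set.right_mem_uIcc
  rw [integral_eq_sub_of_hasDerivAt hderiv, Real.log_div h₁.ne' h₂.ne']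
  · simp
  · refine ContinuousOn.intervalIntegrable (ContinuousOn.inv₀ (by fun_prop) fun y hy => ?_)
    obtain ⟨h₁, h₂⟩ := hpos y hy
    rw [show 1 - y ^ 2 = (1 + y) * (1 - y) by ring]
    positivity

lemma hasSum_wallisRatio_log {v : ℝ} (hv : v ≠ 0) (hv' : 2 * v ^ 2 < 1) :
    HasSum (fun k : ℕ => wallisRatio k * (-(v ^ 2 / (1 - v ^ 2))) ^ k)
      ((1 - v ^ 2) / (2 * v) * Real.log ((1 + v) / (1 - v))) := by
  have hpos : 0 < 1 - v ^ 2 := by nlinarith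
  have hw : |-(v ^ 2 / (1 - v ^ 2))| < 1 := by
    rw [abs_neg, abs_of_nonneg (by positivity), div_lt_one hpos]
    linarith
  convert hasSum_wallisRatio_mul_pow hw using 1
  have hker (t : ℝ) : (1 - -(v ^ 2 / (1 - v ^ 2)) * (1 - t ^ 2))⁻¹
      = (1 - v ^ 2) * (1 - (v * t) ^ 2)⁻¹ := by
    rw [show 1 - -(v ^ 2 / (1 - v ^ 2)) * (1 - t ^ 2) = (1 - (v * t) ^ 2) / (1 - v ^ 2) by
      field_simp; ring, inv_div, div_eq_mul_inv]
  simp_rw [hker, integral_const_mul]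
  rw [integral_comp_mul_left (fun y => (1 - y ^ 2)⁻¹) hv, mul_zero, mul_one,
    integral_inv_one_sub_sq ((sq_lt_one_iff_abs_lt_one v).mp (by linarith)), smul_eq_mul]
  field_simp

lemma summable_eval_mul_wallisRatio_mul_pow (p : ℝ[X]) {w : ℝ} (hw : |w| < 1) :
    Summable fun k : ℕ => p.eval (k : ℝ) * (wallisRatio k * w ^ k) := by
  simp_rw [eval_eq_sum_range, Finset.sum_mul, mul_assoc]
  refine summable_sum fun j _ => Summable.mul_left _ ?_
  refine (summable_pow_mul_geometric_of_norm_lt_one (R := ℝ) j (r := |w|)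
    (by simpa using hw)).of_norm_bounded fun k => ?_
  rw [norm_mul, norm_mul, norm_pow, norm_pow, Real.norm_natCast, Real.norm_eq_abs w,
    Real.norm_of_nonneg (wallisRatio_nonneg k)]
  gcongr
  exact mul_le_of_le_one_left (by positivity) (wallisRatio_le_one k)

lemma hasSum_wallisRatio_telescoping (q : ℝ[X]) {w : ℝ} (hw : |w| < 1) :
    HasSum (fun k : ℕ => (2 * w * (k + 1) * q.eval (k + 1 : ℝ) - (2 * k + 1) * q.eval (k : ℝ))
      * (wallisRatio k * w ^ k)) (-q.eval 0) := by
  set G : ℕ → ℝ := fun k => ((2 * X + 1) * q).eval (k : ℝ) * (wallisRatio k * w ^ k) with hG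
  have hsum : HasSum G (∑' k, G k) := (summable_eval_mul_wallisRatio_mul_pow _ hw).hasSum
  have hzero : G 0 = q.eval 0 := by simp [hG, wallisRatio_zero]
  have hdiff := ((hasSum_nat_add_iff' 1).mpr hsum).sub hsum
  rw [Finset.sum_range_one, sub_sub_cancel_left, hzero] at hdiff
  refine hdiff.congr_fun fun k => ?_
  simp only [hG, eval_mul, eval_add, eval_X, eval_ofNat, eval_one]
  push_cast
  linear_combination (-w ^ (k + 1) * q.eval (k + 1 : ℝ)) * wallisRatio_succ k

lemma hasSum_succ_pow_five_mul_wallisRatio {w s : ℝ} (hw : |w| < 1)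
    (hs : HasSum (fun k : ℕ => wallisRatio k * w ^ k) s) :
    HasSum (fun k : ℕ => ((k : ℝ) + 1) ^ 5 * wallisRatio k * w ^ k)
      (((1 + 116 * w + 516 * w ^ 2 + 296 * w ^ 3 + 16 * w ^ 4) * s
        + (31 + 406 * w + 460 * w ^ 2 + 48 * w ^ 3)) / (32 * (1 - w) ^ 5)) := by
  -- `q` is found by comparing coefficients of `k`, which is a triangular system.
  let q : ℝ[X] := -(C (31 + 406 * w + 460 * w ^ 2 + 48 * w ^ 3)
    + C ((98 + 420 * w + 112 * w ^ 2) * (1 - w)) * X + C ((124 + 128 * w) * (1 - w) ^ 2) * X ^ 2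
    + C (72 * (1 - w) ^ 3) * X ^ 3 + C (16 * (1 - w) ^ 4) * X ^ 4)
  have hq (x : ℝ) : q.eval x = -(31 + 406 * w + 460 * w ^ 2 + 48 * w ^ 3
      + (98 + 420 * w + 112 * w ^ 2) * (1 - w) * x + (124 + 128 * w) * (1 - w) ^ 2 * x ^ 2
      + 72 * (1 - w) ^ 3 * x ^ 3 + 16 * (1 - w) ^ 4 * x ^ 4) := by
    simp [q]
  have hw' : 1 - w ≠ 0 := (sub_pos.mpr (lt_of_abs_lt hw)).ne'
  have hcomb := ((hs.mul_left (1 + 116 * w + 516 * w ^ 2 + 296 * w ^ 3 + 16 * w ^ 4)).add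
    (hasSum_wallisRatio_telescoping q hw)).div_const (32 * (1 - w) ^ 5)
  have hq_zero : -q.eval 0 = 31 + 406 * w + 460 * w ^ 2 + 48 * w ^ 3 := by
    rw [hq]
    ring
  rw [hq_zero] at hcomb
  refine hcomb.congr_fun fun k => ?_
  rw [hq, hq]
  field_simp
  ring

lemma hasSum_odd_terms_mul_pow {𝕜 : Type*} [Field 𝕜] [NeZero (2 : 𝕜)] [TopologicalSpace 𝕜]
    [IsTopologicalRing 𝕜] {a : ℕ → 𝕜} {w s t : 𝕜} (hs : HasSum (fun k => a k * w ^ k) s)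
    (ht : HasSum (fun k => a k * (-w) ^ k) t) :
    HasSum (fun n => a (2 * n + 1) * w ^ (2 * n + 1)) ((s - t) / 2) := by
  have hinj : Function.Injective fun n : ℕ => 2 * n + 1 := fun _ _ h => by simpa using h
  refine ((hinj.hasSum_iff fun k hk => ?_).mpr ((hs.sub ht).div_const 2)).congr_fun fun n => ?_
  · have hk' : Even k := Nat.not_odd_iff_even.mp fun ⟨n, hn⟩ => hk ⟨n, hn.symm⟩
    rw [hk'.neg_pow, sub_self, zero_div]
  · simp only [Function.comp_apply, (odd_two_mul_add_one n).neg_pow]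
    field_simp
    ring

lemma sixF5_coeff_eq_wallisRatio (n : ℕ) :
    poch (3 / 2) n * poch 2 n ^ 5 / (poch 1 n ^ 3 * poch (5 / 4) n * poch (7 / 4) n * n.factorial)
      = 3 / 64 * (((2 * n + 1 : ℕ) + 1 : ℝ) ^ 5 * wallisRatio (2 * n + 1)) := by
  have hfact : (n.factorial : ℝ) ≠ 0 := by positivity
  calc _ = (n + 1) ^ 5
          * (poch (3 / 2) n * n.factorial / (poch (5 / 4) n * poch (7 / 4) n)) := by
        rw [poch_one, poch_two]
        field_simp
    _ = _ := by
        rw [← wallisRatio_odd]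
        push_cast
        ring

lemma hasSum_sixF5_sq {w s t : ℝ} (hw₀ : w ≠ 0)
    (hs : HasSum (fun k : ℕ => ((k : ℝ) + 1) ^ 5 * wallisRatio k * w ^ k) s)
    (ht : HasSum (fun k : ℕ => ((k : ℝ) + 1) ^ 5 * wallisRatio k * (-w) ^ k) t) :
    HasSum (fun n : ℕ => poch (3 / 2) n * poch 2 n ^ 5
        / (poch 1 n ^ 3 * poch (5 / 4) n * poch (7 / 4) n * n.factorial) * (w ^ 2) ^ n)
      (3 / (128 * w) * (s - t)) := by
  have hodd := (hasSum_odd_terms_mul_pow hs ht).mul_left (3 / (64 * w))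
  rw [show 3 / (64 * w) * ((s - t) / 2) = 3 / (128 * w) * (s - t) by ring] at hodd
  refine hodd.congr_fun fun n => ?_
  rw [sixF5_coeff_eq_wallisRatio, pow_succ w (2 * n), pow_mul]
  field_simp

lemma hasSum_wallisRatio_mul_one_eighth_pow :
    HasSum (fun k : ℕ => wallisRatio k * (1 / 8) ^ k) (8 / √7 * Real.arctan (1 / √7)) := by
  have h7 : √7 ^ 2 = (7 : ℝ) := Real.sq_sqrt (by norm_num)
  have hw : (1 / √7) ^ 2 / (1 + (1 / √7) ^ 2) = (1 / 8 : ℝ) := by norm_num [div_pow, h7]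
  have hfactor : (1 + (1 / √7) ^ 2) / (1 / √7) = 8 / √7 := by
    field_simp
    norm_num [h7]
  simpa only [hw, hfactor] using hasSum_wallisRatio_arctan (u := 1 / √7) (by positivity)

lemma hasSum_wallisRatio_mul_neg_one_eighth_pow :
    HasSum (fun k : ℕ => wallisRatio k * (-(1 / 8)) ^ k) (4 / 3 * Real.log 2) := by
  have hw : -((1 / 3) ^ 2 / (1 - (1 / 3) ^ 2)) = (-(1 / 8) : ℝ) := by norm_num
  have hfactor : (1 - (1 / 3) ^ 2) / (2 * (1 / 3)) = (4 / 3 : ℝ) := by norm_num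
  have harg : (1 + 1 / 3) / (1 - 1 / 3) = (2 : ℝ) := by norm_num
  simpa only [hw, hfactor, harg] using
    hasSum_wallisRatio_log (v := 1 / 3) (by norm_num) (by norm_num)

theorem sixF5_sixtyfourth_value :
    ∑' n : ℕ,
        poch (3/2) n * (poch 2 n)^5
          / ((poch 1 n)^3 * poch (5/4) n * poch (7/4) n * (Nat.factorial n))
          * (1/64 : ℝ) ^ n =
      617416 / 583443 + 19 * Real.log 2 / 729
        + 5298 * Real.arctan (1 / Real.sqrt 7) / (2401 * Real.sqrt 7) := by
  have hw : |(1 / 8 : ℝ)| < 1 := by norm_num [abs_lt]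
  have hsum := hasSum_sixF5_sq (by norm_num)
    (hasSum_succ_pow_five_mul_wallisRatio hw hasSum_wallisRatio_mul_one_eighth_pow)
    (hasSum_succ_pow_five_mul_wallisRatio (by rwa [abs_neg])
      hasSum_wallisRatio_mul_neg_one_eighth_pow)
  rw [show (1 / 8 : ℝ) ^ 2 = 1 / 64 by norm_num] at hsum
  rw [hsum.tsum_eq]
  field_simp
  ring
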